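/- Every exact-repair regenerating code with parameters (n,k,d) = (n,6,7), n ≥ 8, and secondary parameters (B,α,β) satisfies 6B ≤ 16α + 60β (equivalently, 6B ≤ 2B_2 + 4B_3 − 4β, where B_2 = 2α + 14β and B_3 = 3α + 9β). -/

import Mathlib

open Finset

/-- Shannon entropy (base 2) of a finitely-valued random variable `X` on a finite
probability space with mass function `P`. -/
noncomputable def entH {Ω S : Type*} [Fintype Ω] (P : Ω → ℝ) (X : Ω → S) : ℝ :=
  letI := Classical.decEq S
  ∑ s ∈ Finset.univ.image X,
    -((∑ ω ∈ Finset.univ.filter (fun ω => X ω = s), P ω) *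
       Real.logb 2 (∑ ω ∈ Finset.univ.filter (fun ω => X ω = s), P ω))

/-- Conditional entropy `H(X | Y) = H(X, Y) - H(Y)`. -/
noncomputable def condH {Ω S T : Type*} [Fintype Ω] (P : Ω → ℝ) (X : Ω → S) (Y : Ω → T) : ℝ :=
  entH P (fun ω => (X ω, Y ω)) - entH P Y

/-- The joint random variable `W_J = (W_j : j ∈ J)`. -/
def jointW {Ω : Type*} {n : ℕ} {σW : Fin n → Type*} (W : ∀ j, Ω → σW j)
    (J : Finset (Fin n)) : Ω → ∀ j : J, σW j.1 :=
  fun ω j => W j.1 ω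

/-- The joint random variable `(S_i^j : (i,j) ∈ E)` for a set `E` of pairs. -/
def jointS {Ω : Type*} {n : ℕ} {σS : Fin n → Fin n → Type*} (S : ∀ i j, Ω → σS i j)
    (E : Finset (Fin n × Fin n)) : Ω → ∀ e : E, σS e.1.1 e.1.2 :=
  fun ω e => S e.1.1 e.1.2 ω

/-- The joint random variable `S_I^j = (S_i^j : i ∈ I)`. -/
def jointSto {Ω : Type*} {n : ℕ} {σS : Fin n → Fin n → Type*} (S : ∀ i j, Ω → σS i j)
    (I : Finset (Fin n)) (j : Fin n) : Ω → ∀ i : I, σS i.1 j :=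
  fun ω i => S i.1 j ω

/-- An exact-repair regenerating code with parameters `(n,k,d)` (with `1 ≤ k ≤ d ≤ n-1`)
and secondary parameters `(B,α,β)`: the file `M`, the stored data `W j` on server `j`
(servers indexed by `Fin n`, server `j` of the paper being index `j-1`), and the helper
information `S i j` sent from server `i` to repair server `j`. -/
structure IsRegenCode {Ω : Type*} [Fintype Ω] (n k d : ℕ) (B α β : ℝ) (P : Ω → ℝ)
    {σM : Type*} {σW : Fin n → Type*} {σS : Fin n → Fin n → Type*}
    (M : Ω → σM) (W : ∀ j, Ω → σW j) (S : ∀ i j, Ω → σS i j) : Prop where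
  prob_nonneg : ∀ ω, 0 ≤ P ω
  prob_sum : ∑ ω, P ω = 1
  hk : 1 ≤ k
  hkd : k ≤ d
  hdn : d + 1 ≤ n
  hB : 0 ≤ B
  hα : 0 ≤ α
  hβ : 0 ≤ β
  hMB : entH P M = B
  hWα : ∀ j, entH P (W j) = α
  hWM : ∀ j, condH P (W j) M = 0
  hMW : ∀ J : Finset (Fin n), k ≤ J.card → condH P M (jointW W J) = 0
  hSβ : ∀ i j, i ≠ j → entH P (S i j) = β
  hSW : ∀ i j, i ≠ j → condH P (S i j) (W i) = 0
  hWS : ∀ (j : Fin n) (I : Finset (Fin n)), d ≤ I.card → j ∉ I →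
    condH P (W j) (jointSto S I j) = 0

/-- `B_q = qα + ((k-q)(k-q-1)/2)β + (d+1-k)(k-q)β`. -/
noncomputable def Bfun (k d q : ℕ) (α β : ℝ) : ℝ :=
  (q : ℝ) * α + (((k - q) * (k - q - 1) : ℕ) : ℝ) / 2 * β
    + (((d + 1 - k) * (k - q) : ℕ) : ℝ) * β

/-!
Up to null events a random variable is a partition of the probability space, so the random variables
form a lattice: `X ≤ Y` when `Y` determines `X`, and `X ⊔ Y` is the pair. Shannon entropy is a
monotone submodular function on it, and every hypothesis on the code becomes an inequality between
lattice elements.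

Restrict to eight servers and let `h` be the entropy. Start from a set `R` of stored servers. For
each `l` in `K ⊆ R`, the servers `R \ {l}` together with all the help sent to `l` determine `R`;
gluing these families over `R` by submodularity bounds the entropy of `W_R` together with all the
help sent to `K`. In this state the help to `K` from any further server is known, so storing a
server `y` costs only `α - h(S_y^K)`, and the help from `z` to a new server `x` costs only
`h(S_z^x | S_z^C)` for any `C ⊆ K`. Once `k` servers are stored the file is known.

This is used with `|R| = 3` three times, arranged cyclically so that the entropies of help cancel,
with `|R| = 4` once, and is combined with the cut-set bound on four servers. The result is
`6B ≤ 16α + 61β` plus an error term; the three error terms obtained by rotating the roles of three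
servers sum to at most `-3β`.
-/

section PartitionEntropy

/-- The total weight of the class of `ω` under the equivalence relation `s`. -/
noncomputable def classMass {Ω : Type*} [Fintype Ω] (P : Ω → ℝ) (s : Setoid Ω) (ω : Ω) : ℝ :=
  letI := Classical.decRel s
  ∑ x with s ω x, P x

/-- The Shannon entropy (base 2) of the partition of `Ω` into the classes of `s`. The sum runs over
points rather than classes. -/
noncomputable def partitionEntropy {Ω : Type*} [Fintype Ω] (P : Ω → ℝ) (s : Setoid Ω) : ℝ :=
  -∑ ω, P ω * Real.logb 2 (classMass P s ω)

variable {Ω : Type*} [Fintype Ω] {P : Ω → ℝ} {s t u : Setoid Ω}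

lemma classMass_eq_sum_filter (P : Ω → ℝ) (s : Setoid Ω) [DecidableRel s] (ω : Ω) :
    classMass P s ω = ∑ x with s ω x, P x := by
  unfold classMass
  congr!

lemma classMass_congr {ω x : Ω} (h : s ω x) : classMass P s ω = classMass P s x := by
  classical
  have (y : Ω) : s ω y ↔ s x y := ⟨s.trans (s.symm h), s.trans h⟩
  simp only [classMass_eq_sum_filter, this]

lemma classMass_pos (hP : ∀ ω, 0 < P ω) (s : Setoid Ω) (ω : Ω) : 0 < classMass P s ω := by
  classical
  rw [classMass_eq_sum_filter]
  exact sum_pos (fun x _ => hP x) ⟨ω, by simp⟩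

lemma classMass_mono (hP : ∀ ω, 0 < P ω) (hst : s ≤ t) (ω : Ω) :
    classMass P s ω ≤ classMass P t ω := by
  classical
  simp only [classMass_eq_sum_filter]
  exact sum_le_sum_of_subset_of_nonneg (monotone_filter_right _ fun x _ => @hst ω x)
    fun x _ _ => (hP x).le

lemma classMass_lt_classMass (hP : ∀ ω, 0 < P ω) (hst : s ≤ t) {ω x : Ω} (ht : t ω x)
    (hs : ¬ s ω x) : classMass P s ω < classMass P t ω := by
  classical
  simp only [classMass_eq_sum_filter]
  exact sum_lt_sum_of_subset (monotone_filter_right _ fun x _ => @hst ω x) (i := x)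
    (by simpa using ht) (by simpa using hs) (hP x) fun y _ _ => (hP y).le

lemma partitionEntropy_top (hP1 : ∑ ω, P ω = 1) : partitionEntropy P ⊤ = 0 := by
  classical
  simp [partitionEntropy, classMass, Setoid.top_def, hP1]

lemma partitionEntropy_strictAnti (hP : ∀ ω, 0 < P ω) : StrictAnti (partitionEntropy P) := by
  intro s t hst
  obtain ⟨ω, x, ht, hs⟩ : ∃ ω x, t ω x ∧ ¬ s ω x := by
    simpa [Setoid.le_def] using hst.not_ge
  refine neg_lt_neg (sum_lt_sum (fun ω _ => ?_) ⟨ω, mem_univ ω, ?_⟩)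
  · gcongr
    exacts [(hP ω).le, one_lt_two, classMass_pos hP s ω, classMass_mono hP hst.le ω]
  · gcongr
    exacts [hP ω, one_lt_two, classMass_pos hP s ω, classMass_lt_classMass hP hst.le ht hs]

lemma sum_mul_eq_sum_classAverage (hP : ∀ ω, 0 < P ω) (s : Setoid Ω) [DecidableRel s]
    (f : Ω → ℝ) :
    ∑ ω, P ω * f ω = ∑ ω, P ω * ((∑ x with s ω x, P x * f x) / classMass P s ω) := by
  have average_one (x : Ω) : ∑ ω with s x ω, P ω / classMass P s ω = 1 := by
    rw [← div_self (classMass_pos hP s x).ne', classMass_eq_sum_filter P s x, sum_div]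
    refine sum_congr rfl fun ω hω => ?_
    rw [← classMass_eq_sum_filter, classMass_congr (mem_filter.1 hω).2]
  calc ∑ x, P x * f x = ∑ x, (P x * f x) * ∑ ω with s x ω, P ω / classMass P s ω := by
        simp only [average_one, mul_one]
    _ = ∑ ω, ∑ x with s ω x, (P x * f x) * (P ω / classMass P s ω) := by
        simp only [mul_sum]
        exact sum_comm' fun x ω => by simp [s.comm']
    _ = ∑ ω, P ω * ((∑ x with s ω x, P x * f x) / classMass P s ω) := by
        refine sum_congr rfl fun ω _ => ?_
        rw [← sum_mul]
        ring

lemma sum_div_classMass_le_one (hP : ∀ ω, 0 < P ω) (s : Setoid Ω) (A : Finset Ω)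
    (hA : ∀ ω ∈ A, ∀ x ∈ A, s ω x) : ∑ ω ∈ A, P ω / classMass P s ω ≤ 1 := by
  classical
  obtain rfl | ⟨ω, hω⟩ := A.eq_empty_or_nonempty
  · simp
  calc ∑ x ∈ A, P x / classMass P s x = (∑ x ∈ A, P x) / classMass P s ω := by
        rw [sum_div]
        exact sum_congr rfl fun x hx => by rw [classMass_congr (hA x hx ω hω)]
    _ ≤ 1 := by
        rw [div_le_one (classMass_pos hP s ω), classMass_eq_sum_filter]
        exact sum_le_sum_of_subset_of_nonneg (fun x hx => by simpa using hA ω hω x hx)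
          fun x _ _ => (hP x).le

lemma sum_class_mul_classMass_div_le (hP : ∀ ω, 0 < P ω) [DecidableRel s] (hs : s ≤ u)
    (ht : t ≤ u) (ω : Ω) :
    ∑ x with s ω x, P x * (classMass P t x / classMass P (s ⊓ t) x) ≤ classMass P u ω := by
  classical
  calc ∑ x with s ω x, P x * (classMass P t x / classMass P (s ⊓ t) x)
      = ∑ x with s ω x, ∑ y with t x y, P y * (P x / classMass P (s ⊓ t) x) := by
        simp only [← sum_mul, classMass_eq_sum_filter P t]
        exact sum_congr rfl fun x _ => by ring
    _ = ∑ y with u ω y, ∑ x with s ω x ∧ t x y, P y * (P x / classMass P (s ⊓ t) x) := by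
        refine sum_comm' fun x y => ?_
        simp only [mem_filter, mem_univ, true_and]
        exact ⟨fun h => ⟨h, u.trans (hs h.1) (ht h.2)⟩, And.left⟩
    _ ≤ ∑ y with u ω y, P y := by
        refine sum_le_sum fun y _ => ?_
        rw [← mul_sum]
        refine mul_le_of_le_one_right (hP y).le (sum_div_classMass_le_one hP _ _ ?_)
        intro x hx x' hx'
        obtain ⟨hsx, htx⟩ := (mem_filter.1 hx).2
        obtain ⟨hsx', htx'⟩ := (mem_filter.1 hx').2
        exact ⟨s.trans (s.symm hsx) hsx', t.trans htx (t.symm htx')⟩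
    _ = classMass P u ω := (classMass_eq_sum_filter P u ω).symm

lemma sum_mul_classMass_ratio_le_one (hP : ∀ ω, 0 < P ω) (hP1 : ∑ ω, P ω = 1) (hs : s ≤ u)
    (ht : t ≤ u) :
    ∑ ω, P ω * (classMass P s ω * classMass P t ω /
      (classMass P (s ⊓ t) ω * classMass P u ω)) ≤ 1 := by
  classical
  rw [sum_mul_eq_sum_classAverage hP s, ← hP1]
  refine sum_le_sum fun ω _ => mul_le_of_le_one_right (hP ω).le ?_
  have hsω := classMass_pos hP s ω
  have huω := classMass_pos hP u ω
  rw [div_le_one hsω]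
  calc ∑ x with s ω x, P x * (classMass P s x * classMass P t x /
        (classMass P (s ⊓ t) x * classMass P u x))
      = classMass P s ω / classMass P u ω *
          ∑ x with s ω x, P x * (classMass P t x / classMass P (s ⊓ t) x) := by
        rw [mul_sum]
        refine sum_congr rfl fun x hx => ?_
        have hx : s ω x := (mem_filter.1 hx).2
        rw [classMass_congr hx, classMass_congr (hs hx)]
        ring
    _ ≤ classMass P s ω / classMass P u ω * classMass P u ω := by
        gcongr
        exact sum_class_mul_classMass_div_le hP hs ht ω
    _ = classMass P s ω := div_mul_cancel₀ _ huω.ne'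

lemma sum_mul_logb_nonpos {b : ℝ} (hb : 1 < b) (hP : ∀ ω, 0 ≤ P ω) (hP1 : ∑ ω, P ω = 1)
    {r : Ω → ℝ} (hr : ∀ ω, 0 < r ω) (hr1 : ∑ ω, P ω * r ω ≤ 1) :
    ∑ ω, P ω * Real.logb b (r ω) ≤ 0 := by
  have jensen : ∑ ω, P ω * Real.log (r ω) ≤ Real.log (∑ ω, P ω * r ω) :=
    strictConcaveOn_log_Ioi.concaveOn.le_map_sum (fun ω _ => hP ω) hP1 fun ω _ => hr ω
  have log_nonpos : Real.log (∑ ω, P ω * r ω) ≤ 0 :=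
    Real.log_nonpos (sum_nonneg fun ω _ => mul_nonneg (hP ω) (hr ω).le) hr1
  simp only [Real.logb, mul_div_assoc', ← sum_div]
  exact div_nonpos_of_nonpos_of_nonneg (jensen.trans log_nonpos) (Real.log_pos hb).le

lemma partitionEntropy_inf_add_sup_le (hP : ∀ ω, 0 < P ω) (hP1 : ∑ ω, P ω = 1)
    (s t : Setoid Ω) :
    partitionEntropy P (s ⊓ t) + partitionEntropy P (s ⊔ t) ≤
      partitionEntropy P s + partitionEntropy P t := by
  have pos (r : Setoid Ω) (ω : Ω) : 0 < classMass P r ω := classMass_pos hP r ω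
  have gibbs := sum_mul_logb_nonpos one_lt_two (fun ω => (hP ω).le) hP1
    (fun ω => div_pos (mul_pos (pos s ω) (pos t ω)) (mul_pos (pos (s ⊓ t) ω) (pos (s ⊔ t) ω)))
    (sum_mul_classMass_ratio_le_one hP hP1 le_sup_left le_sup_right)
  have logb_ratio (ω : Ω) : Real.logb 2 (classMass P s ω * classMass P t ω /
        (classMass P (s ⊓ t) ω * classMass P (s ⊔ t) ω)) =
      Real.logb 2 (classMass P s ω) + Real.logb 2 (classMass P t ω) -
        (Real.logb 2 (classMass P (s ⊓ t) ω) + Real.logb 2 (classMass P (s ⊔ t) ω)) := by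
    rw [Real.logb_div (mul_pos (pos s ω) (pos t ω)).ne'
        (mul_pos (pos (s ⊓ t) ω) (pos (s ⊔ t) ω)).ne',
      Real.logb_mul (pos s ω).ne' (pos t ω).ne',
      Real.logb_mul (pos (s ⊓ t) ω).ne' (pos (s ⊔ t) ω).ne']
  simp only [logb_ratio, mul_sub, mul_add, sum_sub_distrib, sum_add_distrib] at gibbs
  unfold partitionEntropy
  linarith

end PartitionEntropy

section PolymatroidRank

/-- A polymatroid rank function on a lattice: normalized, monotone and submodular. -/
structure IsPolymatroidRank {L : Type*} [Lattice L] [OrderBot L] (h : L → ℝ) : Prop where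
  map_bot : h ⊥ = 0
  monotone : Monotone h
  sup_add_inf_le : ∀ a b, h (a ⊔ b) + h (a ⊓ b) ≤ h a + h b

/-- The conditional rank `h(x | c)`, the analogue of conditional entropy. -/
def condRank {L : Type*} [SemilatticeSup L] (h : L → ℝ) (x c : L) : ℝ :=
  h (c ⊔ x) - h c

namespace IsPolymatroidRank

variable {L : Type*} [Lattice L] [OrderBot L] {h : L → ℝ} (hh : IsPolymatroidRank h)
include hh

lemma sup_add_le {a b c : L} (hca : c ≤ a) (hcb : c ≤ b) : h (a ⊔ b) + h c ≤ h a + h b := by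
  linarith [hh.sup_add_inf_le a b, hh.monotone (le_inf hca hcb)]

lemma condRank_antitone (x : L) : Antitone (condRank h x) := by
  intro c a hca
  have := hh.sup_add_le hca (le_sup_left : c ≤ c ⊔ x)
  rw [← sup_assoc, sup_eq_left.2 hca] at this
  unfold condRank
  linarith

lemma condRank_bot (x : L) : condRank h x ⊥ = h x := by
  simp [condRank, hh.map_bot]

lemma sup_sup_le_add_sum_condRank {κ : Type*} {a : L} (x c : κ → L) (M : Finset κ)
    (hc : ∀ i ∈ M, c i ≤ a) : h (a ⊔ M.sup x) ≤ h a + ∑ i ∈ M, condRank h (x i) (c i) := by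
  classical
  induction M using Finset.induction_on with
  | empty => simp
  | insert i M hi ih =>
    have ih := ih fun j hj => hc j (mem_insert_of_mem hj)
    have step := hh.condRank_antitone (x i)
      ((hc i (mem_insert_self i M)).trans (le_sup_left : a ≤ a ⊔ M.sup x))
    rw [sup_insert, sum_insert hi, sup_comm (x i), ← sup_assoc]
    rw [condRank] at step
    linarith

end IsPolymatroidRank

end PolymatroidRank

section RepairSystem

/-- All the help sent to server `j`. -/
def incoming {ι L : Type*} [Fintype ι] [DecidableEq ι] [SemilatticeSup L] [OrderBot L]
    (S : ι → ι → L) (j : ι) : L :=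
  (univ.erase j).sup fun i => S i j

/-- The lattice form of an exact-repair regenerating code with `d + 1` servers `ι`: `W i` is stored
on server `i`, `S i j` is sent from `i` to repair `j`, and `h` is the entropy. Here `a ≤ b` means
that `b` determines `a`. The file itself is only visible through its size `B`. -/
structure IsRepairSystem {ι L : Type*} [Fintype ι] [DecidableEq ι] [Lattice L] [OrderBot L]
    (k : ℕ) (B α β : ℝ) (h : L → ℝ) (W : ι → L) (S : ι → ι → L) : Prop
    extends IsPolymatroidRank h where
  le_card : k ≤ Fintype.card ι
  rank_storage : ∀ i, h (W i) = α
  rank_help : ∀ i j, i ≠ j → h (S i j) = β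
  help_le_storage : ∀ i j, i ≠ j → S i j ≤ W i
  storage_le_incoming : ∀ j, W j ≤ incoming S j
  file_le_rank : ∀ J : Finset ι, k ≤ #J → B ≤ h (J.sup W)

namespace IsRepairSystem

section General

variable {ι L : Type*} [Fintype ι] [DecidableEq ι] [Lattice L] [OrderBot L]
  {k : ℕ} {B α β : ℝ} {h : L → ℝ} {W : ι → L} {S : ι → ι → L}

lemma sup_help_le_sup_incoming {K : Finset ι} {i : ι} (hi : i ∉ K) :
    K.sup (S i) ≤ K.sup (incoming S) :=
  Finset.sup_mono_fun fun j hj =>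
    le_sup (f := fun i => S i j) (mem_erase.2 ⟨fun hij => hi (hij ▸ hj), mem_univ i⟩)

variable (H : IsRepairSystem k B α β h W S)
include H

lemma sup_help_le_storage {K : Finset ι} {i : ι} (hi : i ∉ K) : K.sup (S i) ≤ W i :=
  Finset.sup_le fun j hj => H.help_le_storage i j fun hij => hi (hij ▸ hj)

lemma sup_storage_insert_le {R : Finset ι} {a : L} (hR : R.sup W ≤ a) (j : ι) :
    (insert j R).sup W ≤ a ⊔ incoming S j := by
  rw [sup_insert]
  exact sup_le (le_sup_of_le_right (H.storage_le_incoming j)) (le_sup_of_le_left hR)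

lemma rank_sup_incoming_le_sum_condRank {R : Finset ι} {a : L} {j : ι} {c : ι → L}
    (hR : R.sup W ≤ a) (hc : ∀ i ∈ (insert j R)ᶜ, c i ≤ a) :
    h (a ⊔ incoming S j) ≤ h a + ∑ i ∈ (insert j R)ᶜ, condRank h (S i j) (c i) := by
  refine (H.monotone ?_).trans (H.sup_sup_le_add_sum_condRank (fun i => S i j) c _ hc)
  refine sup_le le_sup_left (Finset.sup_le fun i hi => ?_)
  by_cases hiR : i ∈ R
  · exact le_sup_of_le_left <|
      (H.help_le_storage i j (ne_of_mem_erase hi)).trans ((le_sup hiR).trans hR)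
  · exact le_sup_of_le_right <| le_sup (f := fun i => S i j) <| by
      simp [hiR, ne_of_mem_erase hi]

lemma rank_sup_incoming_le {R : Finset ι} {a : L} (hR : R.sup W ≤ a) (j : ι) :
    h (a ⊔ incoming S j) ≤ h a + #(insert j R)ᶜ * β := by
  refine (H.rank_sup_incoming_le_sum_condRank (c := fun _ => ⊥) hR fun _ _ => bot_le).trans_eq ?_
  rw [sum_congr rfl (g := fun _ => β), sum_const, nsmul_eq_mul]
  intro i hi
  rw [H.condRank_bot, H.rank_help i j]
  rintro rfl
  simp at hi

lemma cutset_bound {R : Finset ι} {a : L} (hR : R.sup W ≤ a) :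
    B ≤ h a + (∑ t ∈ Ico #R k, (Fintype.card ι - (t + 1)) : ℕ) * β := by
  induction hm : k - #R generalizing R a with
  | zero =>
    have hk : k ≤ #R := Nat.le_of_sub_eq_zero hm
    simpa [Ico_eq_empty_of_le hk] using (H.file_le_rank R hk).trans (H.monotone hR)
  | succ m ih =>
    have hk : #R < k := by omega
    obtain ⟨j, hj⟩ : ∃ j, j ∉ R := by
      by_contra! hall
      exact (hk.trans_le H.le_card).ne (congrArg card (eq_univ_of_forall hall))
    have hcard : #(insert j R) = #R + 1 := card_insert_of_notMem hj
    have ih := ih (H.sup_storage_insert_le hR j) (by omega)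
    have step := H.rank_sup_incoming_le hR j
    rw [card_compl, hcard] at step
    rw [hcard] at ih
    rw [sum_eq_sum_Ico_succ_bot hk]
    push_cast at ih ⊢
    linarith

lemma rank_storage_sup_incoming_le {R K : Finset ι} (hK : K ⊆ R) :
    h (R.sup W ⊔ K.sup (incoming S)) ≤
      h (R.sup W) + ∑ l ∈ K, (h ((R.erase l).sup W) + #Rᶜ * β - h (R.sup W)) := by
  refine (H.sup_sup_le_add_sum_condRank (incoming S) (fun _ => R.sup W) K fun _ _ => le_rfl).trans
    (add_le_add_right (sum_le_sum fun l hl => sub_le_sub_right ?_ _) _)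
  have hR : insert l (R.erase l) = R := insert_erase (hK hl)
  have hglue : R.sup W ⊔ incoming S l ≤ (R.erase l).sup W ⊔ incoming S l := by
    refine sup_le ?_ le_sup_right
    conv_lhs => rw [← hR]
    exact H.sup_storage_insert_le le_rfl l
  have hcost := H.rank_sup_incoming_le (le_refl ((R.erase l).sup W)) l
  rw [hR] at hcost
  exact (H.monotone hglue).trans hcost

lemma file_le_of_store_repair {R K : Finset ι} (hK : K ⊆ R) {x y : ι} (hx : x ∉ R) (hy : y ∉ R)
    (hxy : x ≠ y) {C : ι → Finset ι} (hC : ∀ z, C z ⊆ K) :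
    B ≤ h (R.sup W) + ∑ l ∈ K, (h ((R.erase l).sup W) + #Rᶜ * β - h (R.sup W)) +
        (α - h (K.sup (S y))) +
        ∑ z ∈ (insert x (insert y R))ᶜ, condRank h (S z x) ((C z).sup (S z)) +
        (∑ t ∈ Ico (#R + 2) k, (Fintype.card ι - (t + 1)) : ℕ) * β := by
  set a := R.sup W ⊔ K.sup (incoming S)
  have known {z : ι} (hz : z ∉ R) : K.sup (S z) ≤ a :=
    le_sup_of_le_right (sup_help_le_sup_incoming fun hzK => hz (hK hzK))
  have glued : h a ≤ _ := H.rank_storage_sup_incoming_le hK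
  have stored : h (a ⊔ W y) + h (K.sup (S y)) ≤ h a + α :=
    H.rank_storage y ▸
      H.sup_add_le (known hy) (H.sup_help_le_storage fun hyK => hy (hK hyK))
  have storage_le : (insert y R).sup W ≤ a ⊔ W y := by
    rw [sup_insert, sup_comm]
    exact sup_le_sup_right le_sup_left _
  have repaired := H.rank_sup_incoming_le_sum_condRank (j := x) (c := fun z => (C z).sup (S z))
    storage_le fun z hz => le_sup_of_le_left <| (sup_mono (hC z)).trans <| known fun hzR =>
      mem_compl.1 hz (mem_insert_of_mem (mem_insert_of_mem hzR))
  have completed := H.cutset_bound (H.sup_storage_insert_le storage_le x)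
  rw [card_insert_of_notMem (by simp [hx, hxy]), card_insert_of_notMem hy] at completed
  linarith

lemma rank_pair_storage_le (i j : ι) : h (({i, j} : Finset ι).sup W) ≤ 2 * α := by
  have := H.sup_add_le (bot_le : ⊥ ≤ W i) (bot_le : ⊥ ≤ W j)
  rw [H.map_bot, H.rank_storage, H.rank_storage] at this
  rw [sup_insert, sup_singleton]
  linarith

lemma condRank_help_add_condRank_help_le {i p q s v : ι} (hv : i ≠ v) :
    condRank h (S i p) (({q, s, v} : Finset ι).sup (S i)) +
        condRank h (S i q) (({s, p, v} : Finset ι).sup (S i)) + β ≤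
      h (({p, q, v} : Finset ι).sup (S i)) := by
  have drop_sp : condRank h (S i q) (({s, p, v} : Finset ι).sup (S i)) ≤
      condRank h (S i q) (S i v) :=
    H.condRank_antitone _ (le_sup (by simp))
  have drop_s : condRank h (S i p) (({q, s, v} : Finset ι).sup (S i)) ≤
      condRank h (S i p) (S i v ⊔ S i q) :=
    H.condRank_antitone _ (sup_le (le_sup (by simp)) (le_sup (by simp)))
  have chain : h (({p, q, v} : Finset ι).sup (S i)) =
      β + condRank h (S i q) (S i v) + condRank h (S i p) (S i v ⊔ S i q) := by
    simp only [sup_insert, sup_singleton, condRank, H.rank_help i v hv, sup_comm]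
    ring
  linarith

end General

section SixOfEight

variable {ι L : Type*} [Fintype ι] [DecidableEq ι] [Lattice L] [OrderBot L]
  {B α β : ℝ} {h : L → ℝ} {W : ι → L} {S : ι → ι → L} (H : IsRepairSystem 6 B α β h W S)
include H

lemma file_add_rank_triple_le (hι : Fintype.card ι = 8) {r p q x y z : ι}
    (hd : [r, p, q, x, y, z].Nodup) :
    B + h (({r, p, q} : Finset ι).sup W) ≤
      5 * α + 13 * β - h (({p, q} : Finset ι).sup (S y)) + h (({q, x} : Finset ι).sup (S z)) := by
  have card_stored : #({r, p, q} : Finset ι) = 3 := by grind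
  have card_others : #({r, p, q} : Finset ι)ᶜ = 5 := by rw [card_compl, hι, card_stored]
  set T : Finset ι := (insert x (insert y {r, p, q}))ᶜ with hT
  have card_erase : #(T.erase z) = 2 := by
    have : #(insert x (insert y {r, p, q}) : Finset ι) = 5 := by grind
    rw [card_erase_of_mem (by grind [mem_compl]), hT, card_compl, hι, this]
  have help_cost : ∑ i ∈ T, condRank h (S i x) ((if i = z then {q} else ∅ : Finset ι).sup (S i)) =
      h (({q, x} : Finset ι).sup (S z)) + β := by
    have others : ∀ i ∈ T.erase z,
        condRank h (S i x) ((if i = z then {q} else ∅ : Finset ι).sup (S i)) = β := by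
      intro i hi
      rw [if_neg (ne_of_mem_erase hi), sup_empty, H.condRank_bot,
        H.rank_help i x (by grind [mem_compl])]
    rw [← add_sum_erase T _ (show z ∈ T by grind [mem_compl]), sum_congr rfl others, sum_const,
      card_erase]
    simp only [condRank, if_true, sup_insert, sup_singleton, H.rank_help z q (by grind),
      nsmul_eq_mul]
    push_cast
    ring
  have bound := H.file_le_of_store_repair (R := {r, p, q}) (K := {p, q}) (x := x) (y := y)
    (C := fun i => if i = z then {q} else ∅) (by grind) (by grind) (by grind) (by grind) (by grind)
  have erase_p : ({r, p, q} : Finset ι).erase p = {r, q} := by grind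
  have erase_q : ({r, p, q} : Finset ι).erase q = {r, p} := by grind
  rw [sum_pair (by grind), erase_p, erase_q, help_cost, card_others, card_stored, hι] at bound
  have remaining : ∑ t ∈ Ico (3 + 2) 6, (8 - (t + 1)) = 2 := rfl
  rw [remaining] at bound
  push_cast at bound
  linarith [H.rank_pair_storage_le r p, H.rank_pair_storage_le r q]

lemma file_add_rank_quadruple_le (hι : Fintype.card ι = 8) {r p q s x y z w : ι}
    (hd : [r, p, q, s, x, y, z, w].Nodup) :
    B + 2 * h (({r, p, q, s} : Finset ι).sup W) ≤
      h (({r, p, q} : Finset ι).sup W) + h (({r, q, s} : Finset ι).sup W) +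
        h (({r, s, p} : Finset ι).sup W) + 12 * β + α - h (({p, q, s} : Finset ι).sup (S y)) +
        condRank h (S z x) (({p, q, s} : Finset ι).sup (S z)) +
        condRank h (S w x) (({p, q, s} : Finset ι).sup (S w)) := by
  have card_stored : #({r, p, q, s} : Finset ι) = 4 := by grind
  have card_others : #({r, p, q, s} : Finset ι)ᶜ = 4 := by rw [card_compl, hι, card_stored]
  have rest : (insert x (insert y {r, p, q, s}))ᶜ = ({z, w} : Finset ι) := by
    have : #(insert x (insert y {r, p, q, s}) : Finset ι) = 6 := by grind
    refine (eq_of_subset_of_card_le (by grind [mem_compl]) ?_).symm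
    rw [card_compl, hι, this, card_pair (by grind)]
  have bound := H.file_le_of_store_repair (R := {r, p, q, s}) (K := {p, q, s}) (x := x) (y := y)
    (C := fun _ => {p, q, s}) (by grind) (by grind) (by grind) (by grind) (by grind)
  have erase_p : ({r, p, q, s} : Finset ι).erase p = {r, q, s} := by grind
  have erase_q : ({r, p, q, s} : Finset ι).erase q = {r, s, p} := by grind
  have erase_s : ({r, p, q, s} : Finset ι).erase s = {r, p, q} := by grind
  rw [rest, sum_pair (a := z) (by grind), sum_insert (by grind), sum_pair (by grind), erase_p,
    erase_q, erase_s, card_others, card_stored, Ico_self, sum_empty] at bound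
  push_cast at bound
  linarith

lemma six_mul_file_le_add (hι : Fintype.card ι = 8) {r p q s x y z w : ι}
    (hd : [r, p, q, s, x, y, z, w].Nodup) :
    6 * B ≤ 16 * α + 61 * β - h (({p, q, s} : Finset ι).sup (S y)) +
      condRank h (S z x) (({p, q, s} : Finset ι).sup (S z)) +
      condRank h (S w x) (({p, q, s} : Finset ι).sup (S w)) := by
  have cutset := H.cutset_bound (le_refl (({r, p, q, s} : Finset ι).sup W))
  have card_quadruple : #({r, p, q, s} : Finset ι) = 4 := by grind
  have repair_cost : ∑ t ∈ Ico 4 6, (8 - (t + 1)) = 5 := rfl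
  rw [card_quadruple, hι, repair_cost] at cutset
  push_cast at cutset
  have quadruple := H.file_add_rank_quadruple_le hι hd
  have triple_s := H.file_add_rank_triple_le hι (show [r, p, q, s, y, z].Nodup by grind)
  have triple_p := H.file_add_rank_triple_le hι (show [r, q, s, p, z, w].Nodup by grind)
  have triple_q := H.file_add_rank_triple_le hι (show [r, s, p, q, w, y].Nodup by grind)
  linarith

end SixOfEight

theorem six_mul_file_le {L : Type*} [Lattice L] [OrderBot L] {B α β : ℝ} {h : L → ℝ}
    {W : Fin 8 → L} {S : Fin 8 → Fin 8 → L} (H : IsRepairSystem 6 B α β h W S) :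
    6 * B ≤ 16 * α + 60 * β := by
  have bound₁ := H.six_mul_file_le_add (Fintype.card_fin 8)
    (show [0, 2, 3, 4, 1, 5, 6, 7].Nodup by decide)
  have bound₂ := H.six_mul_file_le_add (Fintype.card_fin 8)
    (show [0, 3, 1, 4, 2, 6, 7, 5].Nodup by decide)
  have bound₃ := H.six_mul_file_le_add (Fintype.card_fin 8)
    (show [0, 1, 2, 4, 3, 7, 5, 6].Nodup by decide)
  have saving₅ := H.condRank_help_add_condRank_help_le (p := 2) (q := 3) (s := 1)
    (show (5 : Fin 8) ≠ 4 by decide)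
  have saving₆ := H.condRank_help_add_condRank_help_le (p := 3) (q := 1) (s := 2)
    (show (6 : Fin 8) ≠ 4 by decide)
  have saving₇ := H.condRank_help_add_condRank_help_le (p := 1) (q := 2) (s := 3)
    (show (7 : Fin 8) ≠ 4 by decide)
  linarith

end IsRepairSystem

end RepairSystem

section Information

variable {Ω : Type*} {P : Ω → ℝ} {σ τ : Type*}

/-- The information carried by `X`: the partition of the points of positive probability into the
fibres of `X`. In the order dual of the lattice of partitions `info P X ≤ info P Y` says that `Y`
determines `X` almost surely. -/
def info (P : Ω → ℝ) (X : Ω → σ) : (Setoid {ω // 0 < P ω})ᵒᵈ :=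
  OrderDual.toDual (Setoid.ker fun ω => X ω)

lemma info_prodMk (X : Ω → σ) (Y : Ω → τ) :
    info P (fun ω => (X ω, Y ω)) = info P X ⊔ info P Y :=
  congrArg OrderDual.toDual (Setoid.ext fun _ _ => Prod.mk_inj)

lemma info_restrict {κ : Type*} {σ : κ → Type*} (X : ∀ i, Ω → σ i) (I : Finset κ) :
    info P (fun ω (i : I) => X i ω) = I.sup fun i => info P (X i) := by
  refine le_antisymm (fun a b hab => ?_) (Finset.sup_le fun i hi a b hab => congrFun hab ⟨i, hi⟩)
  exact funext fun i => le_sup (f := fun i => info P (X i)) i.2 hab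

variable [Fintype Ω]

/-- The entropy of an information element, normalized so that `infoEntropy (info P X) = H(X)`. -/
noncomputable def infoEntropy (a : (Setoid {ω // 0 < P ω})ᵒᵈ) : ℝ :=
  partitionEntropy (fun ω : {ω // 0 < P ω} => P ω) (OrderDual.ofDual a)

lemma sum_subtype_pos_mul (hP : ∀ ω, 0 ≤ P ω) (f : Ω → ℝ) :
    ∑ ω : {ω // 0 < P ω}, P ω * f ω = ∑ ω, P ω * f ω := by
  rw [← sum_subtype {ω | 0 < P ω} (by simp) fun ω => P ω * f ω]
  exact sum_filter_of_ne fun ω _ hω => (hP ω).lt_of_ne' (left_ne_zero_of_mul hω)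

lemma infoEntropy_strictMono : StrictMono (infoEntropy (P := P)) :=
  fun _ _ hab => partitionEntropy_strictAnti (fun ω : {ω // 0 < P ω} => ω.2) hab

lemma isPolymatroidRank_infoEntropy (hP : ∀ ω, 0 ≤ P ω) (hP1 : ∑ ω, P ω = 1) :
    IsPolymatroidRank (infoEntropy (P := P)) := by
  have sum_eq_one : ∑ ω : {ω // 0 < P ω}, P ω = 1 := by
    simpa [hP1] using sum_subtype_pos_mul hP fun _ => 1
  exact {
    map_bot := partitionEntropy_top sum_eq_one
    monotone := infoEntropy_strictMono.monotone
    sup_add_inf_le := fun a b =>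
      partitionEntropy_inf_add_sup_le (fun ω => ω.2) sum_eq_one a.ofDual b.ofDual }

lemma infoEntropy_info (hP : ∀ ω, 0 ≤ P ω) (X : Ω → σ) :
    infoEntropy (info P X) = entH P X := by
  classical
  have classMass_ker (ω : {ω // 0 < P ω}) :
      classMass (fun x : {x // 0 < P x} => P x) (Setoid.ker fun x => X x) ω =
        ∑ x with X x = X ω, P x := by
    simpa [classMass_eq_sum_filter, sum_filter, Setoid.ker_def, eq_comm] using
      sum_subtype_pos_mul hP fun x => if X x = X ω then 1 else 0
  have sum_fibers :
      ∑ ω, P ω * Real.logb 2 (∑ x with X x = X ω, P x) =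
        ∑ s ∈ univ.image X, (∑ ω with X ω = s, P ω) * Real.logb 2 (∑ x with X x = s, P x) := by
    rw [← sum_fiberwise_of_maps_to fun ω _ => mem_image_of_mem X (mem_univ ω)]
    refine sum_congr rfl fun s _ => ?_
    rw [sum_mul]
    exact sum_congr rfl fun ω hω => by rw [(mem_filter.1 hω).2]
  simp only [infoEntropy, info, partitionEntropy, OrderDual.ofDual_toDual, classMass_ker, entH,
    sum_neg_distrib]
  rw [sum_subtype_pos_mul hP fun ω => Real.logb 2 (∑ x with X x = X ω, P x), sum_fibers]

lemma info_le_info_of_condH_eq_zero (hP : ∀ ω, 0 ≤ P ω) {X : Ω → σ} {Y : Ω → τ}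
    (h : condH P X Y = 0) : info P X ≤ info P Y := by
  rw [condH, ← infoEntropy_info hP, ← infoEntropy_info hP, info_prodMk, sub_eq_zero] at h
  by_contra hXY
  exact (infoEntropy_strictMono (right_lt_sup.2 hXY)).ne' h

end Information

lemma IsRegenCode.isRepairSystem {Ω : Type*} [Fintype Ω] {n k d : ℕ} {B α β : ℝ} {P : Ω → ℝ}
    {σM : Type*} {σW : Fin n → Type*} {σS : Fin n → Fin n → Type*}
    {M : Ω → σM} {W : ∀ j, Ω → σW j} {S : ∀ i j, Ω → σS i j}
    (hcode : IsRegenCode n k d B α β P M W S)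
    {ι : Type*} [Fintype ι] [DecidableEq ι] (e : ι ↪ Fin n) (hι : Fintype.card ι = d + 1) :
    IsRepairSystem k B α β infoEntropy (fun i => info P (W (e i)))
      fun i j => info P (S (e i) (e j)) where
  __ := isPolymatroidRank_infoEntropy hcode.prob_nonneg hcode.prob_sum
  le_card := hι ▸ Nat.le_succ_of_le hcode.hkd
  rank_storage i := (infoEntropy_info hcode.prob_nonneg _).trans (hcode.hWα _)
  rank_help i j hij :=
    (infoEntropy_info hcode.prob_nonneg _).trans (hcode.hSβ _ _ (e.injective.ne hij))
  help_le_storage i j hij :=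
    info_le_info_of_condH_eq_zero hcode.prob_nonneg (hcode.hSW _ _ (e.injective.ne hij))
  storage_le_incoming j := by
    have := info_le_info_of_condH_eq_zero hcode.prob_nonneg
      (hcode.hWS (e j) ((univ.erase j).map e) (by simp [hι]) (by simp))
    rwa [show info P (jointSto S ((univ.erase j).map e) (e j)) = _ from
      info_restrict (fun i => S i (e j)) _, sup_map] at this
  file_le_rank J hJ := by
    have := info_le_info_of_condH_eq_zero hcode.prob_nonneg
      (hcode.hMW (J.map e) (by simpa using hJ))
    rw [show info P (jointW W (J.map e)) = _ from info_restrict W _, sup_map] at this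
    rw [← hcode.hMB, ← infoEntropy_info hcode.prob_nonneg]
    exact (isPolymatroidRank_infoEntropy hcode.prob_nonneg hcode.prob_sum).monotone this

/-- every `(n,6,7)` exact-repair code with `n ≥ 8` satisfies
`6B ≤ 16α + 60β`. -/
theorem stmt_14 {Ω : Type*} [Fintype Ω] {n : ℕ} {B α β : ℝ} {P : Ω → ℝ}
    {σM : Type*} {σW : Fin n → Type*} {σS : Fin n → Fin n → Type*}
    {M : Ω → σM} {W : ∀ j, Ω → σW j} {S : ∀ i j, Ω → σS i j}
    (hn : 8 ≤ n)
    (hcode : IsRegenCode n 6 7 B α β P M W S) :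
    6 * B ≤ 16 * α + 60 * β := by
  have restricted := hcode.isRepairSystem (Fin.castLEEmb hn) (Fintype.card_fin 8)
  exact restricted.six_mul_file_le
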